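/- arXiv:1203.5965 — 5 statements merged into one kernel-verified Lean document; each statement's English description precedes it below -/
import Mathlib

section
/- Let K be a field and q ∈ K with q ≠ 0 and q² ≠ 1. Let A be an associative K-algebra, let e₁, e₂, f₁, f₂ ∈ A, and let K₁, K₂ ∈ A be invertible elements such that K₁*K₂ = K₂*K₁, e₁*f₁ − f₁*e₁ = (K₁ − K₁⁻¹)/(q − q⁻¹), e₂*f₂ − f₂*e₂ = (K₂ − K₂⁻¹)/(q − q⁻¹), e₁*f₂ = f₂*e₁, e₂*f₁ = f₁*e₂, K₁*e₂ = q⁻¹·e₂*K₁, K₂*e₁ = q⁻¹·e₁*K₂, K₁*f₂ = q·f₂*K₁, and K₂*f₁ = q·f₁*K₂. Then the elements E := [e₁, e₂]_q and F := [f₂, f₁]_{q⁻¹} satisfy E*F − F*E = (K₁*K₂ − (K₁*K₂)⁻¹)/(q − q⁻¹). -/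
/-!
The commutator `[E, F]` is computed through the Leibniz rule. The cross relations give the two partial commutators
`[E, f₂] = q • e₁ K₂⁻¹` and `[E, f₁] = -e₂ K₁`; moving `K₂⁻¹` past `f₁` and `K₁` past `f₂` then
leaves `[E, F] = [e₁, f₁] K₂⁻¹ + [e₂, f₂] K₁`, in which the mixed terms `K₁ K₂⁻¹` cancel.
-/

/-- The `a`-commutator `[x, y]_a = x*y - a • (y*x)` in a `K`-algebra. -/
def qComm {K : Type*} [Field K] {A : Type*} [Ring A] [Algebra K A]
    (a : K) (x y : A) : A := x * y - a • (y * x)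

/-- A `q`-commutation relation with a unit passes to the inverse unit with the inverse scalar. -/
lemma units_inv_mul_of_smul {K : Type*} [Field K] {A : Type*} [Ring A] [Algebra K A]
    {a : K} (ha : a ≠ 0) (u : Aˣ) (x : A) (h : (u : A) * x = a • (x * (u : A))) :
    ((u⁻¹ : Aˣ) : A) * x = a⁻¹ • (x * ((u⁻¹ : Aˣ) : A)) := by
  rw [Units.inv_mul_eq_iff_eq_mul, mul_smul_comm, ← mul_assoc, h, smul_mul_assoc,
    Units.mul_inv_cancel_right, inv_smul_smul₀ ha]

/-- `[e_γ, f_γ] = (q^{h_γ} - q^{-h_γ})/(q - q⁻¹)` for a composite root `γ = α + μ`: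
with `E = [e₁,e₂]_q` and `F = [f₂,f₁]_{q⁻¹}` one has
`E*F - F*E = (K₁K₂ - (K₁K₂)⁻¹)/(q - q⁻¹)`. -/
theorem composite_root_ef_commutator {K : Type*} [Field K] (q : K) (hq : q ≠ 0)
    (hq2 : q ^ 2 ≠ 1) {A : Type*} [Ring A] [Algebra K A]
    (e₁ e₂ f₁ f₂ : A) (K₁ K₂ : Aˣ)
    (hK : (K₁ : A) * (K₂ : A) = (K₂ : A) * (K₁ : A))
    (h1 : e₁ * f₁ - f₁ * e₁ = (q - q⁻¹)⁻¹ • ((K₁ : A) - ((K₁⁻¹ : Aˣ) : A)))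
    (h2 : e₂ * f₂ - f₂ * e₂ = (q - q⁻¹)⁻¹ • ((K₂ : A) - ((K₂⁻¹ : Aˣ) : A)))
    (h3 : e₁ * f₂ = f₂ * e₁) (h4 : e₂ * f₁ = f₁ * e₂)
    (h5 : (K₁ : A) * e₂ = q⁻¹ • (e₂ * (K₁ : A)))
    (h6 : (K₂ : A) * e₁ = q⁻¹ • (e₁ * (K₂ : A)))
    (h7 : (K₁ : A) * f₂ = q • (f₂ * (K₁ : A)))
    (h8 : (K₂ : A) * f₁ = q • (f₁ * (K₂ : A))) :
    qComm q e₁ e₂ * qComm q⁻¹ f₂ f₁ - qComm q⁻¹ f₂ f₁ * qComm q e₁ e₂ =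
      (q - q⁻¹)⁻¹ • (((K₁ * K₂ : Aˣ) : A) - (((K₁ * K₂)⁻¹ : Aˣ) : A)) := by
  have hc : (q - q⁻¹)⁻¹ * (q - q⁻¹) = 1 := by
    apply inv_mul_cancel₀
    intro h
    apply hq2
    field_simp at h
    linear_combination h
  have hL2e := units_inv_mul_of_smul (inv_ne_zero hq) K₂ e₁ h6
  have hL1e := units_inv_mul_of_smul (inv_ne_zero hq) K₁ e₂ h5
  have hL2f := units_inv_mul_of_smul hq K₂ f₁ h8
  rw [inv_inv] at hL2e hL1e
  have hKL : (K₁ : A) * ((K₂⁻¹ : Aˣ) : A) = ((K₂⁻¹ : Aˣ) : A) * (K₁ : A) := by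
    have hcomm : Commute (K₁ : A) (K₂ : A) := hK
    exact hcomm.units_inv_right
  have hLL : (((K₁ * K₂)⁻¹ : Aˣ) : A) = ((K₁⁻¹ : Aˣ) : A) * ((K₂⁻¹ : Aˣ) : A) := by
    have : K₁ * K₂ = K₂ * K₁ := Units.ext hK
    rw [this, mul_inv_rev, Units.val_mul]
  rw [hLL, Units.val_mul]
  generalize ((K₁⁻¹ : Aˣ) : A) = L₁ at *
  generalize ((K₂⁻¹ : Aˣ) : A) = L₂ at *
  generalize (K₁ : A) = k₁ at *
  generalize (K₂ : A) = k₂ at *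
  generalize (q - q⁻¹)⁻¹ = c at *
  have hEf2 : qComm q e₁ e₂ * f₂ - f₂ * qComm q e₁ e₂ = q • (e₁ * L₂) := by
    have : qComm q e₁ e₂ * f₂ - f₂ * qComm q e₁ e₂
        = e₁ * (e₂ * f₂ - f₂ * e₂) - q • ((e₂ * f₂ - f₂ * e₂) * e₁)
          + ((e₁ * f₂ - f₂ * e₁) * e₂ - q • (e₂ * (e₁ * f₂ - f₂ * e₁))) := by
      simp only [qComm, mul_sub, sub_mul, smul_mul_assoc, mul_smul_comm, mul_assoc]
      module
    rw [this, h2, h3]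
    simp only [mul_sub, sub_mul, smul_mul_assoc, mul_smul_comm, h6, hL2e, sub_self, zero_mul,
      mul_zero, smul_zero, add_zero]
    match_scalars
    · field_simp
      ring
    · have hq' : q * q⁻¹ = 1 := mul_inv_cancel₀ hq
      linear_combination q * hc + c * hq'
  have hEf1 : qComm q e₁ e₂ * f₁ - f₁ * qComm q e₁ e₂ = -(e₂ * k₁) := by
    have : qComm q e₁ e₂ * f₁ - f₁ * qComm q e₁ e₂
        = (e₁ * f₁ - f₁ * e₁) * e₂ - q • (e₂ * (e₁ * f₁ - f₁ * e₁))
          + (e₁ * (e₂ * f₁ - f₁ * e₂) - q • ((e₂ * f₁ - f₁ * e₂) * e₁)) := by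
      simp only [qComm, mul_sub, sub_mul, smul_mul_assoc, mul_smul_comm, mul_assoc]
      module
    rw [this, h1, h4]
    simp only [mul_sub, sub_mul, smul_mul_assoc, mul_smul_comm, h5, hL1e, sub_self, zero_mul,
      mul_zero, smul_zero, add_zero]
    match_scalars
    · linear_combination -hc
    · ring
  generalize qComm q e₁ e₂ = E at *
  have hLeib : E * qComm q⁻¹ f₂ f₁ - qComm q⁻¹ f₂ f₁ * E
      = (E * f₂ - f₂ * E) * f₁ + f₂ * (E * f₁ - f₁ * E)
        - q⁻¹ • ((E * f₁ - f₁ * E) * f₂ + f₁ * (E * f₂ - f₂ * E)) := by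
    simp only [qComm, mul_sub, sub_mul, smul_mul_assoc, mul_smul_comm, mul_assoc]
    module
  have hsum : E * qComm q⁻¹ f₂ f₁ - qComm q⁻¹ f₂ f₁ * E
      = (e₁ * f₁ - f₁ * e₁) * L₂ + (e₂ * f₂ - f₂ * e₂) * k₁ := by
    rw [hLeib, hEf2, hEf1]
    simp only [sub_mul, neg_mul, mul_neg, smul_mul_assoc, mul_smul_comm, mul_assoc, hL2f, h7,
      smul_add, smul_neg, smul_smul, mul_inv_cancel₀ hq, inv_mul_cancel₀ hq, one_smul]
    abel
  rw [hsum, h1, h2]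
  simp only [sub_mul, smul_mul_assoc, hKL, hK]
  module
end

section
/- Let K be a field and q ∈ K with q ≠ 0 and q² ≠ 1. Let A be an associative K-algebra, let e, f, g ∈ A, and let H ∈ A be invertible, satisfying e*f − f*e = (H − H⁻¹)/(q − q⁻¹), e*g = g*e, and H*g = q·g*H. Then e*[g, f]_{q⁻¹} − [g, f]_{q⁻¹}*e = −q⁻¹·g*H⁻¹. -/
/-- Abstract form of `[e_μ, f_{μ+γ}] = -q⁻¹ f_γ q^{-h_μ}`:
`e*[g,f]_{q⁻¹} - [g,f]_{q⁻¹}*e = -q⁻¹ • (g*H⁻¹)`. -/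
theorem e_comm_gf {K : Type*} [Field K] (q : K) (hq : q ≠ 0) (hq2 : q ^ 2 ≠ 1)
    {A : Type*} [Ring A] [Algebra K A] (e f g : A) (H : Aˣ)
    (hef : e * f - f * e = (q - q⁻¹)⁻¹ • ((H : A) - ((H⁻¹ : Aˣ) : A)))
    (heg : e * g = g * e)
    (hHg : (H : A) * g = q • (g * (H : A))) :
    e * qComm q⁻¹ g f - qComm q⁻¹ g f * e = -q⁻¹ • (g * ((H⁻¹ : Aˣ) : A)) := by
  -- `q ^ 2 ≠ 1` is what makes the denominator `q - q⁻¹` nonzero.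
  have hd : q - q⁻¹ ≠ 0 := by
    intro h
    apply hq2
    field_simp at h
    linear_combination h
  have hinv : ((H⁻¹ : Aˣ) : A) * g = q⁻¹ • (g * ((H⁻¹ : Aˣ) : A)) := by
    rw [Units.inv_mul_eq_iff_eq_mul, mul_smul_comm, ← mul_assoc, hHg, smul_mul_assoc,
      smul_smul, inv_mul_cancel₀ hq, one_smul, Units.mul_inv_cancel_right]
  -- Since `e` commutes with `g`, bracketing with `e` only acts on the factor `f`.
  have hred : e * qComm q⁻¹ g f - qComm q⁻¹ g f * e
      = g * (e * f - f * e) - q⁻¹ • ((e * f - f * e) * g) := by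
    have h₁ : e * (g * f) = g * (e * f) := by rw [← mul_assoc, heg, mul_assoc]
    have h₂ : f * g * e = f * e * g := by rw [mul_assoc, ← heg, mul_assoc]
    simp only [qComm, mul_sub, sub_mul, mul_smul_comm, smul_mul_assoc, smul_sub, h₁, h₂,
      mul_assoc g f e, ← mul_assoc e f g]
    abel
  -- The `g * H` terms cancel, leaving `(q - q⁻¹)⁻¹ * (q⁻² - 1) = -q⁻¹` in front of `g * H⁻¹`.
  rw [hred, hef, mul_smul_comm, smul_mul_assoc, mul_sub, sub_mul, hHg, hinv]
  have hc : -q⁻¹ = (q - q⁻¹)⁻¹ * (q⁻¹ * q⁻¹ - 1) := by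
    rw [eq_inv_mul_iff_mul_eq₀ hd]
    field_simp
    ring
  have h1 : q⁻¹ * q = 1 := inv_mul_cancel₀ hq
  rw [hc, smul_comm q⁻¹, ← smul_sub, mul_smul, smul_sub q⁻¹, smul_smul q⁻¹ q, h1,
    smul_smul q⁻¹ q⁻¹, one_smul, sub_smul, one_smul]
  congr 1
  abel
end

section
/- Let K be a field and q ∈ K with q ≠ 0 and q² ≠ 1. Let A be an associative K-algebra, let e, f, g ∈ A, and let H ∈ A be invertible, satisfying e*f − f*e = (H − H⁻¹)/(q − q⁻¹), e*g = g*e, and H*g = q·g*H. Then e*[f, g]_{q⁻¹} − [f, g]_{q⁻¹}*e = g*H. -/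
/-- Abstract form of `[e_γ, f_{μ+γ}] = f_μ q^{h_γ}`:
`e*[f,g]_{q⁻¹} - [f,g]_{q⁻¹}*e = g*H`. -/
theorem e_comm_fg {K : Type*} [Field K] (q : K) (hq : q ≠ 0) (hq2 : q ^ 2 ≠ 1)
    {A : Type*} [Ring A] [Algebra K A] (e f g : A) (H : Aˣ)
    (hef : e * f - f * e = (q - q⁻¹)⁻¹ • ((H : A) - ((H⁻¹ : Aˣ) : A)))
    (heg : e * g = g * e)
    (hHg : (H : A) * g = q • (g * (H : A))) :
    e * qComm q⁻¹ f g - qComm q⁻¹ f g * e = g * (H : A) := by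
  have hc : q - q⁻¹ ≠ 0 := by
    intro h
    apply hq2
    field_simp at h
    linear_combination h
  have hinv : ((H⁻¹ : Aˣ) : A) * g = q⁻¹ • (g * ((H⁻¹ : Aˣ) : A)) := by
    have h1 : g * ((H⁻¹ : Aˣ) : A) = q • (((H⁻¹ : Aˣ) : A) * g) := by
      calc g * ((H⁻¹ : Aˣ) : A)
          = ((H⁻¹ : Aˣ) : A) * ((H : A) * g) * ((H⁻¹ : Aˣ) : A) := by simp
        _ = q • (((H⁻¹ : Aˣ) : A) * g) := by
            rw [hHg]
            simp [mul_assoc]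
    rw [h1, smul_smul, inv_mul_cancel₀ hq, one_smul]
  -- Since `e` commutes with `g`, the commutator with `e` only acts on `f`.
  have key : e * qComm q⁻¹ f g - qComm q⁻¹ f g * e
      = (e * f - f * e) * g - q⁻¹ • (g * (e * f - f * e)) := by
    have h1 : e * (g * f) = g * (e * f) := by rw [← mul_assoc, heg, mul_assoc]
    have h2 : f * g * e = f * e * g := by rw [mul_assoc, ← heg, mul_assoc]
    simp only [qComm, mul_sub, sub_mul, mul_smul_comm, smul_mul_assoc, smul_sub, h1, h2,
      mul_assoc]
    abel
  -- The `H⁻¹` terms cancel, and the `H` terms add up to `(q - q⁻¹) • (g * H)`.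
  have hH : ((H : A) - ((H⁻¹ : Aˣ) : A)) * g - q⁻¹ • (g * ((H : A) - ((H⁻¹ : Aˣ) : A)))
      = (q - q⁻¹) • (g * (H : A)) := by
    rw [sub_mul, hHg, hinv, mul_sub, smul_sub, sub_smul]
    abel
  rw [key, hef, smul_mul_assoc, mul_smul_comm, smul_comm q⁻¹, ← smul_sub, hH, smul_smul,
    inv_mul_cancel₀ hc, one_smul]
end

section
/- Let K be a field and q ∈ K with q ≠ 0 and q² ≠ 1. Let A be an associative K-algebra, let e, E, f, F ∈ A, and let H ∈ A be invertible, satisfying E*F − F*E = (H − H⁻¹)/(q − q⁻¹), e*f = f*e, e*F = F*e, E*f = f*E, H*e = q⁻¹·e*H, and H*f = q·f*H. Then [e, E]_q * [f, F]_{q⁻¹} − [f, F]_{q⁻¹} * [e, E]_q = (q − q⁻¹)·f*e*H⁻¹. -/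
/-!
Write `X = [e, E]_q` and `D = E * F - F * E`. Since `e` and `E` commute with `f`, so does `X`; since
`e` commutes with `F`, `X * F - F * X = e * D - q • (D * e)`. In the latter the `H`-terms cancel,
because `H` `q⁻¹`-commutes with `e`, and what remains is `q • (e * H⁻¹)`. Hence the commutator of `X`
with `[f, F]_{q⁻¹}` is `q • (f * e * H⁻¹) - e * H⁻¹ * f`, and moving `H⁻¹` past `f` costs `q⁻¹`.
-/

/-- If `u` `a`-commutes with `x`, then `u⁻¹` `a⁻¹`-commutes with `x`. -/
lemma units_inv_mul_of_mul_eq_smul {K : Type*} [Field K] {A : Type*} [Ring A] [Algebra K A]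
    {a : K} (ha : a ≠ 0) {x : A} {u : Aˣ} (h : (u : A) * x = a • (x * (u : A))) :
    ((u⁻¹ : Aˣ) : A) * x = a⁻¹ • (x * ((u⁻¹ : Aˣ) : A)) := by
  rw [Units.inv_mul_eq_iff_eq_mul, mul_smul_comm, ← mul_assoc, h, smul_mul_assoc, mul_assoc,
    Units.mul_inv, mul_one, smul_smul, inv_mul_cancel₀ ha, one_smul]

/-- Abstract form of `[e_{μ+γ}, f_{γ+ν}] = (q - q⁻¹) f_ν e_μ q^{-h_γ}`. -/
theorem composite_cross_commutator {K : Type*} [Field K] (q : K) (hq : q ≠ 0)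
    (hq2 : q ^ 2 ≠ 1) {A : Type*} [Ring A] [Algebra K A]
    (e E f F : A) (H : Aˣ)
    (hEF : E * F - F * E = (q - q⁻¹)⁻¹ • ((H : A) - ((H⁻¹ : Aˣ) : A)))
    (hef : e * f = f * e) (heF : e * F = F * e) (hEf : E * f = f * E)
    (hHe : (H : A) * e = q⁻¹ • (e * (H : A)))
    (hHf : (H : A) * f = q • (f * (H : A))) :
    qComm q e E * qComm q⁻¹ f F - qComm q⁻¹ f F * qComm q e E =
      (q - q⁻¹) • (f * e * ((H⁻¹ : Aˣ) : A)) := by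
  have hHe' := units_inv_mul_of_mul_eq_smul (inv_ne_zero hq) hHe
  have hHf' := units_inv_mul_of_mul_eq_smul hq hHf
  rw [inv_inv] at hHe'
  have hd : q - q⁻¹ ≠ 0 := by
    intro h
    apply hq2
    field_simp at h
    linear_combination h
  have hXf : qComm q e E * f = f * qComm q e E := by
    simp only [qComm, sub_mul, mul_sub, smul_mul_assoc, mul_smul_comm]
    rw [mul_assoc, hEf, ← mul_assoc, hef, mul_assoc E, hef, ← mul_assoc E, hEf, mul_assoc,
      mul_assoc]
  have hXF : qComm q e E * F - F * qComm q e E = q • (e * ((H⁻¹ : Aˣ) : A)) := by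
    have h1 : qComm q e E * F - F * qComm q e E
        = e * (E * F - F * E) - q • ((E * F - F * E) * e) := by
      simp only [qComm, sub_mul, mul_sub, smul_mul_assoc, mul_smul_comm, smul_sub]
      rw [mul_assoc E e F, heF, ← mul_assoc e F E, heF]
      simp only [mul_assoc]
      abel
    rw [h1, hEF]
    simp only [smul_mul_assoc, mul_smul_comm, sub_mul, mul_sub, hHe, hHe']
    match_scalars <;> field_simp <;> ring
  have h2 : qComm q e E * qComm q⁻¹ f F - qComm q⁻¹ f F * qComm q e E
      = f * (qComm q e E * F - F * qComm q e E)
        - q⁻¹ • ((qComm q e E * F - F * qComm q e E) * f) := by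
    generalize qComm q e E = X at hXf
    simp only [qComm, sub_mul, mul_sub, smul_mul_assoc, mul_smul_comm, smul_sub]
    rw [← mul_assoc X f F, hXf, mul_assoc F X f, hXf]
    simp only [mul_assoc]
    abel
  rw [h2, hXF]
  simp only [smul_mul_assoc, mul_smul_comm]
  rw [mul_assoc e, hHf', mul_smul_comm, ← mul_assoc, ← mul_assoc, hef]
  match_scalars
  field_simp
end

section
/- Let K be a field, m a positive integer, and a₁, …, a_m ∈ K pairwise distinct elements. Then for every natural number k: ∑_{(k₁,…,k_m)∈ℕ^m, k₁+⋯+k_m = k} a₁^{k₁}·a₂^{k₂}·⋯·a_m^{k_m} = ∑_{i=1}^{m} a_i^{k+m−1} / ∏_{j≠i} (a_i − a_j). -/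
/-!
Write `h_k` for the left-hand side. The proof is by induction on the number of variables. Splitting
off the exponent of `a 0` gives
`h_k (a 0, a 1, …) = ∑_{p + q = k} (a 0) ^ p * h_q (a 1, …)`. After inserting the induction
hypothesis, the sum over `p + q = k` is geometric, and each `a i` with `i ≠ 0` contributes
`(a i ^ (k + 1) - a 0 ^ (k + 1)) * a i ^ n / ∏_{j ≠ i} (a i - a j)`, where `n + 2` is the number of
variables. The terms in `a 0 ^ (k + 1)` are collected by the identity
`∑_i a i ^ n / ∏_{j ≠ i} (a i - a j) = 0`, which expresses that the polynomial `X ^ n`,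
interpolated at `n + 2` nodes, has vanishing coefficient in degree `n + 1`.
-/

open Finset

/-- Splitting off the exponent of the first variable in the complete homogeneous symmetric
polynomial. -/
lemma sum_antidiagonalTuple_succ {K : Type*} [Field K] (n k : ℕ) (a : Fin (n + 1) → K) :
    ∑ f ∈ Finset.Nat.antidiagonalTuple (n + 1) k, ∏ i, a i ^ f i =
      ∑ p ∈ antidiagonal k, a 0 ^ p.1 *
        ∑ f ∈ Finset.Nat.antidiagonalTuple n p.2, ∏ i : Fin n, a i.succ ^ f i := by
  simp_rw [Finset.mul_sum]
  rw [Finset.sum_sigma']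
  symm
  refine Finset.sum_bij' (fun x _ => (Fin.cons x.1.1 x.2 : Fin (n + 1) → ℕ))
    (fun f _ => ⟨(f 0, ∑ i : Fin n, f i.succ), fun i => f i.succ⟩) ?_ ?_ ?_ ?_ ?_
  · rintro ⟨⟨p, q⟩, f⟩ h
    simp_all [Finset.Nat.mem_antidiagonalTuple, Fin.sum_univ_succ]
  · intro f h
    simp_all [Finset.Nat.mem_antidiagonalTuple, Fin.sum_univ_succ]
  · rintro ⟨⟨p, q⟩, f⟩ h
    simp only [mem_sigma, HasAntidiagonal.mem_antidiagonal, Finset.Nat.mem_antidiagonalTuple] at h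
    obtain ⟨-, rfl⟩ := h
    simp
  · intro f h
    exact Fin.cons_self_tail f
  · rintro ⟨⟨p, q⟩, f⟩ h
    simp [Fin.prod_univ_succ]

lemma prod_erase_succ_sub {K : Type*} [Field K] (n : ℕ) (a : Fin (n + 1) → K) (i : Fin n) :
    ∏ j ∈ univ.erase i.succ, (a i.succ - a j) =
      (a i.succ - a 0) * ∏ j ∈ univ.erase i, (a i.succ - a j.succ) := by
  have h : (univ.erase i.succ : Finset (Fin (n + 1))) =
      insert 0 ((univ.erase i).map (Fin.succEmb n)) := by
    ext j
    refine Fin.cases ?_ (fun j => ?_) j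
    · simp [(Fin.succ_ne_zero i).symm]
    · simp
  rw [h, Finset.prod_insert (by simp), Finset.prod_map]
  rfl

lemma sum_pow_div_prod_eq_zero {K : Type*} [Field K] (n : ℕ) (a : Fin (n + 2) → K)
    (ha : Function.Injective a) :
    ∑ i, a i ^ n / ∏ j ∈ univ.erase i, (a i - a j) = 0 := by
  have h := Lagrange.coeff_eq_sum (s := univ) (v := a) ha.injOn
    (P := (Polynomial.X ^ n : Polynomial K))
    (by rw [Polynomial.degree_X_pow, card_univ, Fintype.card_fin]; norm_cast; omega)
  simpa [Polynomial.coeff_X_pow] using h.symm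

lemma sum_antidiagonal_pow_mul_sub {K : Type*} [Field K] (x y : K) (k : ℕ) :
    (∑ p ∈ antidiagonal k, x ^ p.1 * y ^ p.2) * (y - x) = y ^ (k + 1) - x ^ (k + 1) := by
  rw [Finset.Nat.sum_antidiagonal_eq_sum_range_succ (fun p q => x ^ p * y ^ q)]
  have h := (Commute.all x y).geom_sum₂_mul (k + 1)
  simp only [Nat.add_sub_cancel] at h
  linear_combination -h

/-- Complete homogeneous symmetric polynomial identity:
`∑_{k₁+⋯+k_m=k} a₁^{k₁}⋯a_m^{k_m} = ∑_i a_i^{k+m-1} / ∏_{j≠i} (a_i - a_j)`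
for pairwise distinct `a₁, …, a_m`. -/
theorem complete_homogeneous_partial_fractions {K : Type*} [Field K]
    (m : ℕ) (hm : 0 < m) (a : Fin m → K)
    (ha : ∀ i j : Fin m, i ≠ j → a i ≠ a j) :
    ∀ k : ℕ,
      ∑ f ∈ Finset.Nat.antidiagonalTuple m k, ∏ i, a i ^ f i =
        ∑ i, a i ^ (k + m - 1) / ∏ j ∈ Finset.univ.erase i, (a i - a j) := by
  obtain ⟨n, rfl⟩ : ∃ n, m = n + 1 := ⟨m - 1, by omega⟩
  clear hm
  induction n with
  | zero => intro k; simp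
  | succ n ih =>
    intro k
    have ih' := ih (fun i => a i.succ) (fun i j hij => ha _ _ (by simpa using hij))
    have hvan := sum_pow_div_prod_eq_zero n a
      (fun i j hij => by by_contra hne; exact ha i j hne hij)
    rw [Fin.sum_univ_succ] at hvan
    rw [sum_antidiagonalTuple_succ]
    simp_rw [ih', Finset.mul_sum]
    rw [Finset.sum_comm, Fin.sum_univ_succ (n := n + 1)]
    have h0 : a 0 ^ (k + (n + 1 + 1) - 1) / ∏ j ∈ univ.erase 0, (a 0 - a j) =
        ∑ i : Fin (n + 1), -(a 0 ^ (k + 1) *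
          (a i.succ ^ n / ∏ j ∈ univ.erase i.succ, (a i.succ - a j))) := by
      rw [Finset.sum_neg_distrib, ← Finset.mul_sum,
        show k + (n + 1 + 1) - 1 = k + 1 + n by omega, pow_add, mul_div_assoc]
      linear_combination a 0 ^ (k + 1) * hvan
    rw [h0, ← Finset.sum_add_distrib]
    refine Finset.sum_congr rfl fun i _ => ?_
    have hd : a i.succ - a 0 ≠ 0 := sub_ne_zero.mpr (ha _ _ (Fin.succ_ne_zero i))
    have hgeom : ∑ p ∈ antidiagonal k, a 0 ^ p.1 *
          (a i.succ ^ (p.2 + (n + 1) - 1) / ∏ j ∈ univ.erase i, (a i.succ - a j.succ)) =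
        (∑ p ∈ antidiagonal k, a 0 ^ p.1 * a i.succ ^ p.2) *
          (a i.succ ^ n / ∏ j ∈ univ.erase i, (a i.succ - a j.succ)) := by
      rw [Finset.sum_mul]
      refine Finset.sum_congr rfl fun p _ => ?_
      rw [show p.2 + (n + 1) - 1 = p.2 + n by omega, pow_add]
      ring
    rw [hgeom, prod_erase_succ_sub,
      eq_div_of_mul_eq hd (sum_antidiagonal_pow_mul_sub (a 0) (a i.succ) k),
      show k + (n + 1 + 1) - 1 = k + 1 + n by omega, pow_add (a i.succ) (k + 1) n, div_mul_div_comm]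
    ring
end
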